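/- Let A be a cofinite set of positive integers, i.e., a set containing all but finitely many positive integers. Then log p_A(n) ~ c₀√n as n → ∞, where c₀ = π√(2/3). -/

import Mathlib

/-!
Write `K = π ^ 2 / 6 = ζ(2)`, so that `π √(2/3) √n = 2 √(K n)`. For a finite set `S` of parts, Euler's
product (`hasSum_pA`) gives `∑ n, p_S(n) exp (-t n) = ∏ k ∈ S, (1 - exp (-t k))⁻¹`. This is at
most `exp (K / t)` for every `S` (`prod_le`), and for every `M` and `ε`, once `t` is small, it is at
least `exp ((1 - ε) K / t)` for some finite `S` of parts `≥ M` (`exists_le_prod`).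

Upper bound (`log_pA_le`): only parts `≤ n` matter, so `p_A(n) exp (-t n) ≤ exp (K / t)`, and
`t = √(K / n)` is the optimal choice.

Lower bound (`le_log_pA`): choose `M` with `m ∈ A` for all `m ≥ M`, and `S` as above. The terms with
`n` outside `(1 ± δ) K / t ^ 2` contribute at most `2 exp ((1 - δ ^ 2 / 8) K / t)`: replacing `t` by
`t ± δ t / 4` and applying `prod_le` again bounds each tail (`prod_le_split`, `tilt_lower`,
`tilt_upper`). Hence the window carries most of the sum. If `N` exceeds the window by at least `M`,
then `p_S(n) ≤ p_A(N)` for all `n` in the window, because adjoining the part `N - n ∈ A` is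
injective. With `N = (1 + 2 δ) K / t ^ 2` this gives `log p_A(N) ≥ (1 - 3 δ) 2 √(K N)` eventually.
-/

open Filter Asymptotics Real

/-- `pA A n` is the number of partitions of `n` all of whose parts lie in `A`. -/
noncomputable def pA (A : Set ℕ) (n : ℕ) : ℕ :=
  Nat.card {p : n.Partition // ∀ a ∈ p.parts, a ∈ A}


open Topology

/-! ### Counting partitions and Euler's product -/

/-- Adjoining one part `m` to a partition. -/
def addPart {n : ℕ} (m : ℕ) (hm : 0 < m) (p : n.Partition) : (n + m).Partition where
  parts := m ::ₘ p.parts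
  parts_pos := by
    intro i hi
    rcases Multiset.mem_cons.1 hi with rfl | h
    · exact hm
    · exact p.parts_pos h
  parts_sum := by rw [Multiset.sum_cons, p.parts_sum, add_comm]

lemma addPart_injective {n m : ℕ} (hm : 0 < m) :
    Function.Injective (addPart (n := n) m hm) := by
  intro p q h
  have h1 := congrArg Nat.Partition.parts h
  exact Nat.Partition.ext ((Multiset.cons_inj_right m).1 h1)

/-- A monotonicity in `n` that needs no regularity of `A`: adjoining one fixed part `m ∈ A` is
injective. -/
lemma pA_le_add {S A : Set ℕ} (hSA : S ⊆ A) {m : ℕ} (hm : 0 < m) (hmA : m ∈ A) (n : ℕ) :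
    pA S n ≤ pA A (n + m) := by
  refine Nat.card_le_card_of_injective
    (fun p : {p : n.Partition // ∀ a ∈ p.parts, a ∈ S} =>
      (⟨addPart m hm p.1, ?_⟩ : {p : (n + m).Partition // ∀ a ∈ p.parts, a ∈ A})) ?_
  · intro a ha
    rcases Multiset.mem_cons.1 ha with rfl | h
    · exact hmA
    · exact hSA (p.2 a h)
  · intro p q h
    exact Subtype.ext (addPart_injective hm (congrArg Subtype.val h))

lemma pA_insert_of_lt {S : Set ℕ} {k n : ℕ} (hn : n < k) :
    pA (insert k S) n = pA S n := by
  unfold pA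
  refine Nat.card_congr (Equiv.subtypeEquivRight fun p => ?_)
  refine forall₂_congr fun a ha => ?_
  have : a ≤ n := by
    rw [← p.parts_sum]; exact Multiset.le_sum_of_mem ha
  simp only [Set.mem_insert_iff]
  constructor
  · rintro (h | h)
    · omega
    · exact h
  · exact Or.inr

/-- Partitions with parts in `insert k S` are sorted by whether `k` occurs; if it does, one copy
of it is removed. This is `P_{S ∪ {k}} = P_S + x ^ k P_{S ∪ {k}}` for the generating functions. -/
lemma pA_insert_add {S : Set ℕ} {k : ℕ} (hk : 0 < k) (hkS : k ∉ S) (n : ℕ) :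
    pA (insert k S) (n + k) = pA S (n + k) + pA (insert k S) n := by
  classical
  have hcard : ∀ (A : Set ℕ) (m : ℕ), pA A m =
      (Finset.univ.filter fun p : m.Partition => ∀ a ∈ p.parts, a ∈ A).card := by
    intro A m
    unfold pA
    rw [Nat.card_eq_fintype_card, Fintype.card_subtype]
  rw [hcard, hcard, hcard,
    ← Finset.card_filter_add_card_filter_not (fun p : (n + k).Partition => k ∉ p.parts)]
  congr 1
  · rw [Finset.filter_filter]
    congr 1
    ext p
    simp only [Finset.mem_filter, Finset.mem_univ, true_and, Set.mem_insert_iff]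
    constructor
    · rintro ⟨h1, h2⟩ a ha
      exact (h1 a ha).resolve_left (fun h => h2 (h ▸ ha))
    · intro h
      exact ⟨fun a ha => Or.inr (h a ha), fun hkp => hkS (h k hkp)⟩
  · symm
    refine Finset.card_bij (fun p _ => addPart k hk p) ?_ ?_ ?_
    · intro p hp
      simp only [Finset.mem_filter, Finset.mem_univ, true_and] at hp ⊢
      refine ⟨fun a ha => ?_, fun h => h (Multiset.mem_cons_self k p.parts)⟩
      rcases Multiset.mem_cons.1 ha with rfl | h
      · exact Set.mem_insert _ _
      · exact hp a h
    · intro p _ q _ h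
      exact addPart_injective hk h
    · intro q hq
      simp only [Finset.mem_filter, Finset.mem_univ, true_and, not_not] at hq
      refine ⟨⟨q.parts.erase k, fun {i} hi => q.parts_pos (Multiset.mem_of_mem_erase hi), ?_⟩,
        ?_, ?_⟩
      · have h1 := Multiset.sum_erase hq.2
        rw [q.parts_sum] at h1
        omega
      · simp only [Finset.mem_filter, Finset.mem_univ, true_and]
        exact fun a ha => hq.1 a (Multiset.mem_of_mem_erase ha)
      · exact Nat.Partition.ext (Multiset.cons_erase hq.2)

lemma pA_empty (n : ℕ) : pA ∅ n = if n = 0 then 1 else 0 := by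
  unfold pA
  split_ifs with h
  · subst h
    rw [Nat.card_eq_one_iff_unique]
    refine ⟨⟨fun p q => Subtype.ext (Subsingleton.elim _ _)⟩, ⟨⟨default, ?_⟩⟩⟩
    intro a ha
    have h1 := (default : Nat.Partition 0).parts_pos ha
    have h2 := Multiset.le_sum_of_mem ha
    rw [Nat.Partition.parts_sum] at h2
    omega
  · have : IsEmpty {p : n.Partition // ∀ a ∈ p.parts, a ∈ (∅ : Set ℕ)} := by
      refine ⟨fun p => h ?_⟩
      have : p.1.parts = 0 := Multiset.eq_zero_of_forall_notMem fun a ha => p.2 a ha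
      rw [← p.1.parts_sum, this, Multiset.sum_zero]
    exact Nat.card_of_isEmpty

/-- Solving `f = g + y * (f shifted by k)` for the sum of `f`, with summability as a conclusion. -/
lemma hasSum_of_shift {f g : ℕ → ℝ} {G y : ℝ} {k : ℕ} (hf : ∀ n, 0 ≤ f n) (hg0 : ∀ n, 0 ≤ g n)
    (hg : HasSum g G) (hy : y < 1) (h1 : ∀ n < k, f n = g n)
    (h2 : ∀ n, f (n + k) = g (n + k) + y * f n) :
    HasSum f ((1 - y)⁻¹ * G) := by
  have h1y : 0 < 1 - y := by linarith
  have hsum : ∀ N, ∑ i ∈ Finset.range (k + N), f i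
      = ∑ i ∈ Finset.range (k + N), g i + y * ∑ i ∈ Finset.range N, f i := by
    intro N
    rw [Finset.sum_range_add, Finset.sum_range_add, Finset.mul_sum, add_assoc,
      ← Finset.sum_add_distrib]
    congr 1
    · exact Finset.sum_congr rfl fun i hi => h1 i (Finset.mem_range.1 hi)
    · exact Finset.sum_congr rfl fun i _ => by rw [add_comm k i, h2]
  -- the partial sums satisfy `F ≤ G + y * F`, hence are bounded
  have hs : Summable f := by
    refine summable_of_sum_range_le (c := (1 - y)⁻¹ * G) hf fun N => ?_
    have hle : ∑ i ∈ Finset.range N, f i ≤ ∑ i ∈ Finset.range (k + N), f i :=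
      Finset.sum_le_sum_of_subset_of_nonneg (Finset.range_mono (by omega)) fun i _ _ => hf i
    have hgle : ∑ i ∈ Finset.range (k + N), g i ≤ G := sum_le_hasSum _ (fun i _ => hg0 i) hg
    have := hsum N
    rw [le_inv_mul_iff₀ h1y]
    nlinarith
  have hlim := hs.hasSum.tendsto_sum_nat
  have hk : Tendsto (fun N => k + N) atTop atTop := 
    tendsto_atTop_mono (fun N => Nat.le_add_left N k) tendsto_id
  have e := tendsto_nhds_unique (hlim.comp hk)
    (((hg.tendsto_sum_nat.comp hk).add (hlim.const_mul y)).congr fun N => (hsum N).symm)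
  have : ∑' i, f i = (1 - y)⁻¹ * G := by
    rw [eq_inv_mul_iff_mul_eq₀ h1y.ne']; linarith
  rw [← this]
  exact hs.hasSum

/-- Euler's product for partitions into parts from a finite set. -/
lemma hasSum_pA (S : Finset ℕ) (hS : ∀ k ∈ S, 0 < k) {x : ℝ} (hx0 : 0 ≤ x) (hx : x < 1) :
    HasSum (fun n => (pA (S : Set ℕ) n : ℝ) * x ^ n) (∏ k ∈ S, (1 - x ^ k)⁻¹) := by
  classical
  induction S using Finset.induction_on with
  | empty =>
    simp only [Finset.coe_empty, pA_empty, Finset.prod_empty]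
    convert hasSum_ite_eq (0 : ℕ) (1 : ℝ) using 2 with n
    split_ifs with h <;> simp [h]
  | insert k S hkS ih =>
    have hk : 0 < k := hS k (Finset.mem_insert_self _ _)
    rw [Finset.prod_insert hkS, Finset.coe_insert]
    refine hasSum_of_shift (k := k) (fun n => by positivity) (fun n => by positivity)
      (ih fun j hj => hS j (Finset.mem_insert_of_mem hj))
      (pow_lt_one₀ hx0 hx hk.ne') ?_ ?_
    · intro n hn
      simp only [pA_insert_of_lt hn]
    · intro n
      simp only [pA_insert_add hk (by exact_mod_cast hkS) n]
      push_cast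
      ring

/-! ### Size of Euler's product near `x = 1` -/

/-- Upper bound for Euler's product at `x = exp (-t)`. Its logarithm is
`∑ j ≥ 1, (1 / j) * ∑ k ∈ S, exp (-t j k)`, and the inner sum is at most
`1 / (exp (t j) - 1) ≤ 1 / (t j)`. -/
lemma prod_le (S : Finset ℕ) (hS : ∀ k ∈ S, 0 < k) {t : ℝ} (ht : 0 < t) :
    ∏ k ∈ S, (1 - exp (-t) ^ k)⁻¹ ≤ exp (π ^ 2 / 6 / t) := by
  have hx1 : exp (-t) < 1 := by rw [Real.exp_lt_one_iff]; linarith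
  have hlt : ∀ k, 0 < k → exp (-t) ^ k < 1 := fun k hk => pow_lt_one₀ (exp_pos _).le hx1 hk.ne'
  have hpos : ∀ k ∈ S, 0 < (1 - exp (-t) ^ k)⁻¹ := fun k hk => by
    have := hlt k (hS k hk); exact inv_pos.2 (by linarith)
  rw [← Real.log_le_iff_le_exp (Finset.prod_pos hpos), Real.log_prod fun k hk => (hpos k hk).ne']
  have hlog : ∀ k ∈ S, HasSum (fun j : ℕ => (exp (-t) ^ k) ^ (j + 1) / ((j : ℝ) + 1))
      (Real.log (1 - exp (-t) ^ k)⁻¹) := fun k hk => by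
    rw [Real.log_inv]
    exact Real.hasSum_pow_div_log_of_abs_lt_one
      (by rw [abs_of_nonneg (by positivity)]; exact hlt k (hS k hk))
  -- `ζ(2) / t`, with the summation index shifted by one
  have hz : HasSum (fun j : ℕ => 1 / ((j : ℝ) + 1) ^ 2 / t) (π ^ 2 / 6 / t) := by
    refine HasSum.div_const ?_ t
    have := (hasSum_nat_add_iff' 1).2 hasSum_zeta_two
    simpa using this
  refine hasSum_le (fun j => ?_) (hasSum_sum hlog) hz
  have hj : (0 : ℝ) < (j : ℝ) + 1 := by positivity
  rw [← Finset.sum_div]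
  set y := exp (-t) ^ (j + 1) with hy
  have hy0 : 0 ≤ y := by positivity
  have hy1 : y < 1 := hlt _ (by omega)
  have hye : y = exp (-(t * (j + 1))) := by
    rw [hy, ← Real.exp_nat_mul]; congr 1; push_cast; ring
  have h1 : ∑ k ∈ S, (exp (-t) ^ k) ^ (j + 1) = ∑ k ∈ S, y ^ k := by
    refine Finset.sum_congr rfl fun k _ => ?_
    rw [hy, ← pow_mul, ← pow_mul, mul_comm]
  have hgeo : HasSum (fun i : ℕ => y ^ (i + 1)) (y / (1 - y)) := by
    have := (hasSum_geometric_of_lt_one hy0 hy1).mul_left y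
    simpa [pow_succ', div_eq_mul_inv] using this
  have h2 : ∑ k ∈ S, y ^ k ≤ y / (1 - y) := by
    have hinj : Set.InjOn (fun k : ℕ => k - 1) S := fun a ha b hb h => by
      have := hS a ha; have := hS b hb; simp only at h; omega
    have : ∑ k ∈ S, y ^ k = ∑ i ∈ S.image (fun k => k - 1), y ^ (i + 1) := by
      rw [Finset.sum_image hinj]
      refine Finset.sum_congr rfl fun k hk => ?_
      rw [Nat.sub_add_cancel (hS k hk)]
    rw [this]
    exact sum_le_hasSum _ (fun i _ => by positivity) hgeo
  have h3 : y / (1 - y) ≤ 1 / (t * (j + 1)) := by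
    rw [div_le_div_iff₀ (by linarith) (by positivity)]
    have h4 := Real.add_one_le_exp (t * (j + 1))
    have h5 : y * exp (t * (j + 1)) = 1 := by rw [hye, ← Real.exp_add]; simp
    nlinarith
  rw [h1]
  calc (∑ k ∈ S, y ^ k) / ((j : ℝ) + 1) ≤ 1 / (t * (j + 1)) / ((j : ℝ) + 1) := by
        gcongr; exact h2.trans h3
    _ = _ := by field_simp

/-- Lower bound matching `prod_le`, attained by finitely many parts, all of them at least `M`. In
the double series for the logarithm only the `j ≤ J` are kept; with all parts `k ≥ M` their inner
sums are at least `exp (-t J M) / (t j)`, and `exp (-t J M) → 1` as `t → 0`. -/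
lemma exists_le_prod (M : ℕ) (hM : 0 < M) {ε : ℝ} (hε : 0 < ε) :
    ∀ᶠ t in 𝓝[>] (0 : ℝ), ∃ S : Finset ℕ, (∀ k ∈ S, M ≤ k) ∧
      exp ((1 - ε) * (π ^ 2 / 6 / t)) ≤ ∏ k ∈ S, (1 - exp (-t) ^ k)⁻¹ := by
  have hK : (0 : ℝ) < π ^ 2 / 6 := by positivity
  have hz : HasSum (fun j : ℕ => 1 / ((j : ℝ) + 1) ^ 2) (π ^ 2 / 6) := by
    have := (hasSum_nat_add_iff' 1).2 hasSum_zeta_two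
    simpa using this
  obtain ⟨J, hJ⟩ := (hz.tendsto_sum_nat.eventually
    (lt_mem_nhds (show (1 - ε) * (π ^ 2 / 6) < π ^ 2 / 6 by nlinarith))).exists
  set Z := ∑ j ∈ Finset.range J, 1 / ((j : ℝ) + 1) ^ 2 with hZ
  have hcont : Tendsto (fun t : ℝ => exp (-(t * J * M)) * Z) (𝓝[>] 0) (𝓝 Z) := by
    have : Continuous (fun t : ℝ => exp (-(t * J * M)) * Z) := by fun_prop
    have h := this.tendsto 0
    simp only [zero_mul, neg_zero, Real.exp_zero, one_mul] at h
    exact h.mono_left nhdsWithin_le_nhds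
  filter_upwards [hcont.eventually (lt_mem_nhds hJ), self_mem_nhdsWithin] with t ht1 ht
  have ht : 0 < t := ht
  have hx1 : exp (-t) < 1 := by rw [Real.exp_lt_one_iff]; linarith
  have hlt : ∀ k, 0 < k → exp (-t) ^ k < 1 := fun k hk => pow_lt_one₀ (exp_pos _).le hx1 hk.ne'
  have hlim : Tendsto (fun L : ℕ => ∑ j ∈ Finset.range J,
      (∑ i ∈ Finset.range L, (exp (-t) ^ (j + 1)) ^ (i + M)) / ((j : ℝ) + 1)) atTop
      (𝓝 (∑ j ∈ Finset.range J,
        ((1 - exp (-t) ^ (j + 1))⁻¹ * (exp (-t) ^ (j + 1)) ^ M) / ((j : ℝ) + 1))) := by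
    refine tendsto_finsetSum _ fun j _ => Tendsto.div_const ?_ _
    have := ((hasSum_geometric_of_lt_one (by positivity) (hlt (j + 1) (by omega))).mul_right
      ((exp (-t) ^ (j + 1)) ^ M)).tendsto_sum_nat
    simpa only [pow_add _ _ M] using this
  have hbig : (1 - ε) * (π ^ 2 / 6 / t) < ∑ j ∈ Finset.range J,
        ((1 - exp (-t) ^ (j + 1))⁻¹ * (exp (-t) ^ (j + 1)) ^ M) / ((j : ℝ) + 1) := by
    calc (1 - ε) * (π ^ 2 / 6 / t) = (1 - ε) * (π ^ 2 / 6) / t := by ring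
      _ < exp (-(t * J * M)) * Z / t := by gcongr
      _ = ∑ j ∈ Finset.range J, exp (-(t * J * M)) * (1 / ((j : ℝ) + 1) ^ 2) / t := by
        rw [hZ, Finset.mul_sum, Finset.sum_div]
      _ ≤ _ := by
        refine Finset.sum_le_sum fun j hj => ?_
        have hjJ : (j : ℝ) + 1 ≤ J := by exact_mod_cast Finset.mem_range.1 hj
        have hye : exp (-t) ^ (j + 1) = exp (-(t * (j + 1))) := by
          rw [← Real.exp_nat_mul]; congr 1; push_cast; ring
        have h1 : exp (-(t * J * M)) ≤ (exp (-t) ^ (j + 1)) ^ M := by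
          rw [hye, ← Real.exp_nat_mul]
          refine Real.exp_le_exp.2 ?_
          have : (M : ℝ) * (t * (j + 1)) ≤ M * (t * J) := by gcongr
          linarith
        have h2 : 1 / (t * (j + 1)) ≤ (1 - exp (-t) ^ (j + 1))⁻¹ := by
          rw [one_div]
          refine inv_anti₀ (by linarith [hlt (j + 1) (by omega)]) ?_
          rw [hye]
          linarith [Real.add_one_le_exp (-(t * ((j : ℝ) + 1)))]
        calc exp (-(t * J * M)) * (1 / ((j : ℝ) + 1) ^ 2) / t
            = 1 / (t * (j + 1)) * exp (-(t * J * M)) / ((j : ℝ) + 1) := by field_simp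
          _ ≤ _ := by
            have h3 := (by positivity : 0 ≤ 1 / (t * ((j : ℝ) + 1))).trans h2
            gcongr
  obtain ⟨L, hL⟩ := (hlim.eventually (lt_mem_nhds hbig)).exists
  refine ⟨(Finset.range L).map (addRightEmbedding M), ?_, ?_⟩
  · intro k hk
    obtain ⟨i, -, rfl⟩ := Finset.mem_map.1 hk
    simp
  rw [Finset.prod_map]
  simp only [addRightEmbedding_apply]
  have hpos : ∀ i ∈ Finset.range L, 0 < (1 - exp (-t) ^ (i + M))⁻¹ := fun i _ => by
    have := hlt (i + M) (by omega); exact inv_pos.2 (by linarith)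
  rw [← Real.le_log_iff_exp_le (Finset.prod_pos hpos), Real.log_prod fun k hk => (hpos k hk).ne']
  refine hL.le.trans ?_
  simp only [Finset.sum_div]
  rw [Finset.sum_comm]
  refine Finset.sum_le_sum fun i _ => ?_
  rw [Real.log_inv]
  have hs := Real.hasSum_pow_div_log_of_abs_lt_one (x := exp (-t) ^ (i + M))
      (by rw [abs_of_nonneg (by positivity)]; exact hlt _ (by omega))
  refine le_trans (le_of_eq ?_) (sum_le_hasSum (Finset.range J) (fun j _ => by positivity) hs)
  refine Finset.sum_congr rfl fun j _ => ?_
  rw [← pow_mul, ← pow_mul, mul_comm]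

/-! ### Bounds for the number of partitions -/

lemma pA_le_pA_Icc (A : Set ℕ) (n : ℕ) : pA A n ≤ pA (Finset.Icc 1 n : Finset ℕ) n := by
  refine Nat.card_le_card_of_injective
    (fun p : {p : n.Partition // ∀ a ∈ p.parts, a ∈ A} =>
      (⟨p.1, fun a ha => ?_⟩ :
        {p : n.Partition // ∀ a ∈ p.parts, a ∈ ((Finset.Icc 1 n : Finset ℕ) : Set ℕ)}))
    fun _ _ h => Subtype.ext (congrArg (fun q => q.1) h)
  have h1 := p.1.parts_pos ha
  have h2 := Multiset.le_sum_of_mem ha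
  rw [p.1.parts_sum] at h2
  simp only [Finset.coe_Icc, Set.mem_Icc]
  omega

lemma exp_neg_lt_one {t : ℝ} (ht : 0 < t) : exp (-t) < 1 := by
  rw [Real.exp_lt_one_iff]; linarith

lemma hasSum_pA_exp (S : Finset ℕ) (hS : ∀ k ∈ S, 0 < k) {t : ℝ} (ht : 0 < t) :
    HasSum (fun n : ℕ => (pA (S : Set ℕ) n : ℝ) * exp (-(t * n)))
      (∏ k ∈ S, (1 - exp (-t) ^ k)⁻¹) := by
  have := hasSum_pA S hS (exp_pos (-t)).le (exp_neg_lt_one ht)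
  convert this using 3 with n
  rw [← Real.exp_nat_mul]
  congr 1
  ring

/-- The upper bound: a single term of Euler's product, at the optimal point
`t = π / √(6 n)`. -/
lemma log_pA_le (A : Set ℕ) {n : ℕ} (hn : 0 < n) :
    Real.log (pA A n) ≤ 2 * √(π ^ 2 / 6 * n) := by
  -- if `pA A n = 0` then `log 0 = 0` by convention
  rcases Nat.eq_zero_or_pos (pA A n) with h0 | h0
  · rw [h0, Nat.cast_zero, Real.log_zero]; positivity
  have hn' : (0 : ℝ) < n := by exact_mod_cast hn
  set s := √(π ^ 2 / 6 * n) with hs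
  have hs0 : 0 < s := Real.sqrt_pos.2 (by positivity)
  have hs2 : s ^ 2 = π ^ 2 / 6 * n := Real.sq_sqrt (by positivity)
  set t := s / n with htdef
  have ht : 0 < t := by positivity
  have hS : ∀ k ∈ Finset.Icc 1 n, 0 < k := fun k hk => (Finset.mem_Icc.1 hk).1
  have h1 := (le_hasSum (hasSum_pA_exp _ hS ht) n fun m _ => by positivity).trans
    (prod_le _ hS ht)
  have h2 : (pA A n : ℝ) * exp (-(t * n)) ≤ exp (π ^ 2 / 6 / t) :=
    le_trans (by gcongr; exact pA_le_pA_Icc A n) h1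
  have h3 : (pA A n : ℝ) ≤ exp (2 * s) := by
    have h4 : exp (2 * s) = exp (π ^ 2 / 6 / t) * exp (t * n) := by
      rw [← Real.exp_add]
      congr 1
      have : π ^ 2 / 6 = s ^ 2 / n := by rw [hs2]; field_simp
      rw [this, htdef]
      field_simp
      ring
    rw [h4]
    calc (pA A n : ℝ) = pA A n * exp (-(t * n)) * exp (t * n) := by
          rw [mul_assoc, ← Real.exp_add]; simp
      _ ≤ _ := by gcongr
  exact (Real.log_le_iff_le_exp (by exact_mod_cast h0)).2 h3

/-- Splitting Euler's product at the saddle point. The terms with `n ≤ a` and with `b ≤ n` are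
bounded by exponential tilting, i.e. by the product at `t + u` and `t - u`; those in between are
at most `pA A N * exp (-(t * a))`, since adjoining the part `N - n ≥ M` is injective. -/
lemma prod_le_split {A : Set ℕ} {M : ℕ} (hM : 0 < M) (hMA : ∀ m, M ≤ m → m ∈ A)
    {S : Finset ℕ} (hS : ∀ k ∈ S, M ≤ k) {t u a b : ℝ} (hu : 0 < u) (hut : u < t) {N : ℕ}
    (hN : b + M ≤ N) :
    ∏ k ∈ S, (1 - exp (-t) ^ k)⁻¹ ≤ exp (u * a + π ^ 2 / 6 / (t + u))
      + exp (-(u * b) + π ^ 2 / 6 / (t - u)) + (N + 1) * (pA A N * exp (-(t * a))) := by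
  have hS0 : ∀ k ∈ S, 0 < k := fun k hk => hM.trans_le (hS k hk)
  have hsA : (S : Set ℕ) ⊆ A := fun k hk => hMA k (hS k hk)
  have hp := (hasSum_pA_exp S hS0 (show 0 < t + u by linarith)).mul_left (exp (u * a))
  have hm := (hasSum_pA_exp S hS0 (show 0 < t - u by linarith)).mul_left (exp (-(u * b)))
  have hc : HasSum (fun n => if n ∈ Finset.range (N + 1) then (pA A N * exp (-(t * a)) : ℝ) else 0)
      ((N + 1) * (pA A N * exp (-(t * a)))) := by
    have : HasSum
        (fun n => if n ∈ Finset.range (N + 1) then (pA A N * exp (-(t * a)) : ℝ) else 0) _ :=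
      hasSum_sum_of_ne_finset_zero (s := Finset.range (N + 1)) fun n hn => if_neg hn
    rw [Finset.sum_ite_mem, Finset.inter_self, Finset.sum_const, Finset.card_range,
      nsmul_eq_mul] at this
    exact_mod_cast this
  refine (hasSum_le (f := fun n : ℕ => (pA (S : Set ℕ) n : ℝ) * exp (-(t * n))) (fun n => ?_)
    (hasSum_pA_exp S hS0 (hu.trans hut)) ((hp.add hm).add hc)).trans ?_
  · have e1 : exp (u * a) * ((pA (S : Set ℕ) n : ℝ) * exp (-((t + u) * n)))
        = pA (S : Set ℕ) n * exp (-(t * n) + u * (a - n)) := by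
      rw [mul_left_comm, ← Real.exp_add]; congr 2; ring
    have e2 : exp (-(u * b)) * ((pA (S : Set ℕ) n : ℝ) * exp (-((t - u) * n)))
        = pA (S : Set ℕ) n * exp (-(t * n) + u * (n - b)) := by
      rw [mul_left_comm, ← Real.exp_add]; congr 2; ring
    rw [e1, e2]
    have p1 : (0 : ℝ) ≤ pA (S : Set ℕ) n * exp (-(t * n) + u * (a - n)) := by positivity
    have p2 : (0 : ℝ) ≤ pA (S : Set ℕ) n * exp (-(t * n) + u * (n - b)) := by positivity
    have p3 : (0 : ℝ) ≤ if n ∈ Finset.range (N + 1) then (pA A N * exp (-(t * a)) : ℝ) else 0 := by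
      split_ifs <;> positivity
    rcases le_total (n : ℝ) a with h | h
    · have : (pA (S : Set ℕ) n : ℝ) * exp (-(t * n))
          ≤ pA (S : Set ℕ) n * exp (-(t * n) + u * (a - n)) := by
        gcongr
        nlinarith
      linarith
    rcases le_total b n with h' | h'
    · have : (pA (S : Set ℕ) n : ℝ) * exp (-(t * n))
          ≤ pA (S : Set ℕ) n * exp (-(t * n) + u * (n - b)) := by
        gcongr
        nlinarith
      linarith
    have hnN : n + M ≤ N := by
      have : (n : ℝ) + M ≤ N := by linarith
      exact_mod_cast this
    obtain ⟨d, rfl⟩ := Nat.exists_eq_add_of_le (show n ≤ N by omega)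
    rw [if_pos (Finset.mem_range.2 (by omega))]
    have h1 : pA (S : Set ℕ) n ≤ pA A (n + d) :=
      pA_le_add hsA (by omega) (hMA d (by omega)) n
    have : (pA (S : Set ℕ) n : ℝ) * exp (-(t * n)) ≤ pA A (n + d) * exp (-(t * a)) := by
      have := hu.trans hut
      gcongr
    rw [if_pos (Finset.mem_range.2 (by omega))] at p3
    linarith
  · rw [Real.exp_add, Real.exp_add]
    gcongr
    · exact prod_le S hS0 (by linarith)
    · exact prod_le S hS0 (by linarith)

/-- `log N` is negligible against `√N`. -/
lemma log_le_sqrt {K δ : ℝ} (hK : 0 < K) (hδ : 0 < δ) :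
    ∀ᶠ N : ℕ in atTop, Real.log 2 + Real.log ((N : ℝ) + 1) ≤ 2 * δ * √(K * N) := by
  have hcast : Tendsto (fun N : ℕ => (N : ℝ)) atTop atTop := tendsto_natCast_atTop_atTop
  have hsqrt : Tendsto (fun N : ℕ => √(K * N)) atTop atTop :=
    Real.tendsto_sqrt_atTop.comp (hcast.const_mul_atTop hK)
  have h1 : Tendsto (fun N : ℕ => (N : ℝ) + 1) atTop atTop := hcast.atTop_add tendsto_const_nhds
  have h2 := ((isLittleO_log_rpow_atTop (show (0 : ℝ) < 1 / 2 by norm_num)).comp_tendsto h1).def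
    (show 0 < δ * √K / 2 by positivity)
  filter_upwards [h2, hsqrt.eventually_ge_atTop (Real.log 2 / δ), eventually_ge_atTop 1]
    with N hN1 hN2 hN3
  have hN3' : (1 : ℝ) ≤ N := by exact_mod_cast hN3
  simp only [Function.comp_apply, ← Real.sqrt_eq_rpow, Real.norm_eq_abs] at hN1
  rw [abs_of_nonneg (Real.sqrt_nonneg _)] at hN1
  have h3 := (le_abs_self _).trans hN1
  have h4 : √((N : ℝ) + 1) ≤ 2 * √N := by
    rw [Real.sqrt_le_left (by positivity), mul_pow, Real.sq_sqrt (by positivity)]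
    linarith
  rw [div_le_iff₀ hδ] at hN2
  rw [Real.sqrt_mul hK.le] at hN2 ⊢
  have h5 : δ * √K / 2 * √((N : ℝ) + 1) ≤ δ * √K / 2 * (2 * √N) := by gcongr
  linarith

/-- Exponent of the lower tail in `prod_le_split`, for `u = δ / 4 * t` and
`a = (1 - δ) * (K / t ^ 2)`: it falls short of `K / t` by a fixed proportion. -/
lemma tilt_lower {K t δ : ℝ} (hK : 0 < K) (ht0 : 0 < t) (hδ : 0 < δ) :
    δ / 4 * t * ((1 - δ) * (K / t ^ 2)) + K / (t + δ / 4 * t)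
    ≤ (1 - δ ^ 2 / 8) * (K / t) := by
  have e : δ / 4 * t * ((1 - δ) * (K / t ^ 2)) + K / (t + δ / 4 * t)
    = (δ / 4 * (1 - δ) + 1 / (1 + δ / 4)) * (K / t) := by field_simp
  rw [e]
  gcongr
  have : 1 / (1 + δ / 4) ≤ 1 - δ / 4 + δ ^ 2 / 16 := by
    rw [div_le_iff₀ (by positivity)]
    have : (1 - δ / 4 + δ ^ 2 / 16) * (1 + δ / 4) = 1 + δ ^ 3 / 64 := by ring
    have := pow_pos hδ 3
    linarith
  linarith [sq_nonneg δ]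

/-- Exponent of the upper tail in `prod_le_split`, for `u = δ / 4 * t` and
`b = (1 + δ) * (K / t ^ 2)`. -/
lemma tilt_upper {K t δ : ℝ} (hK : 0 < K) (ht0 : 0 < t) (hδ : 0 < δ) (hδ1 : δ ≤ 1 / 2) :
    -(δ / 4 * t * ((1 + δ) * (K / t ^ 2))) + K / (t - δ / 4 * t)
    ≤ (1 - δ ^ 2 / 8) * (K / t) := by
  have hη : 0 < 1 - δ / 4 := by linarith
  have e : -(δ / 4 * t * ((1 + δ) * (K / t ^ 2))) + K / (t - δ / 4 * t)
    = (-(δ / 4 * (1 + δ)) + 1 / (1 - δ / 4)) * (K / t) := by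
    rw [show t - δ / 4 * t = (1 - δ / 4) * t by ring]; field_simp
  rw [e]
  gcongr
  have : 1 / (1 - δ / 4) ≤ 1 + δ / 4 + δ ^ 2 / 8 := by
    rw [div_le_iff₀ hη]
    have : (1 + δ / 4 + δ ^ 2 / 8) * (1 - δ / 4) = 1 + δ ^ 2 / 32 * (2 - δ) := by ring
    have : 0 ≤ δ ^ 2 / 32 * (2 - δ) := mul_nonneg (by positivity) (by linarith)
    linarith
  linarith

/-- The lower bound. With `K = π ^ 2 / 6` and `t` such that `N = (1 + 2 δ) K / t ^ 2`, the window
`(1 ± δ) K / t ^ 2` around the saddle point lies below `N` and carries at least half of Euler's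
product at `t`. -/
lemma le_log_pA {A : Set ℕ} {M : ℕ} (hM : 0 < M) (hMA : ∀ m, M ≤ m → m ∈ A)
    {δ : ℝ} (hδ : 0 < δ) (hδ1 : δ ≤ 1 / 2) :
    ∀ᶠ N : ℕ in atTop, (1 - 3 * δ) * (2 * √(π ^ 2 / 6 * N)) ≤ Real.log (pA A N) := by
  have hK : (0 : ℝ) < π ^ 2 / 6 := by positivity
  set K := π ^ 2 / 6 with hKdef
  have hcast : Tendsto (fun N : ℕ => (N : ℝ)) atTop atTop := tendsto_natCast_atTop_atTop
  have hsqrt : Tendsto (fun N : ℕ => √(K * N)) atTop atTop :=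
    Real.tendsto_sqrt_atTop.comp (hcast.const_mul_atTop hK)
  have ht : Tendsto (fun N : ℕ => √(K * (1 + 2 * δ) / N)) atTop (𝓝[>] 0) := by
    refine tendsto_nhdsWithin_iff.2 ⟨?_, ?_⟩
    · have := (Real.continuous_sqrt.tendsto 0).comp
        (hcast.const_div_atTop (K * (1 + 2 * δ)))
      rwa [Real.sqrt_zero] at this
    · filter_upwards [eventually_gt_atTop 0] with N hN
      have : (0 : ℝ) < N := by exact_mod_cast hN
      exact Real.sqrt_pos.2 (by positivity)
  filter_upwards [ht.eventually (exists_le_prod M hM (show 0 < δ ^ 2 / 16 by positivity)),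
    log_le_sqrt hK hδ, hsqrt.eventually_ge_atTop (2 * (16 * Real.log 4 / δ ^ 2)),
    hcast.eventually_ge_atTop (3 * M / δ), eventually_gt_atTop 0] with N hS hNlog hNY hNM hN0
  obtain ⟨S, hSM, hS⟩ := hS
  have hN : (0 : ℝ) < N := by exact_mod_cast hN0
  set t := √(K * (1 + 2 * δ) / N) with htdef
  have ht0 : 0 < t := Real.sqrt_pos.2 (by positivity)
  have ht2 : t ^ 2 = K * (1 + 2 * δ) / N := Real.sq_sqrt (by positivity)
  have hNt : (N : ℝ) = (1 + 2 * δ) * (K / t ^ 2) := by rw [ht2]; field_simp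
  set Y := K / t with hY
  have hY0 : 0 < Y := by positivity
  set s := √(K * N) with hs
  have hs0 : 0 < s := Real.sqrt_pos.2 (by positivity)
  have hs2 : s ^ 2 = K * N := Real.sq_sqrt (by positivity)
  have hY2 : (1 + 2 * δ) * Y ^ 2 = s ^ 2 := by rw [hs2, hNt, hY]; ring
  have hYs : s ≤ (1 + δ) * Y := by
    refine (sq_le_sq₀ hs0.le (by positivity)).1 ?_
    rw [← hY2, mul_pow]
    gcongr
    nlinarith [sq_nonneg δ]
  -- `hNM` leaves room for an adjoined part of size at least `M` between the window and `N`
  have hsplit := prod_le_split (A := A) hM hMA hSM (t := t) (u := δ / 4 * t)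
    (a := (1 - δ) * (K / t ^ 2)) (b := (1 + δ) * (K / t ^ 2)) (N := N) (by positivity)
    (by nlinarith) (by
      rw [div_le_iff₀ hδ] at hNM
      have h1 : K / t ^ 2 * (1 + 2 * δ) = N := by rw [hNt]; ring
      have h2 : 0 < K / t ^ 2 := by positivity
      have h3 : (N : ℝ) ≤ 3 * (K / t ^ 2) := by nlinarith
      nlinarith)
  have hY4 : Real.log 4 ≤ δ ^ 2 / 16 * Y := by
    have : 16 * Real.log 4 / δ ^ 2 ≤ Y := by nlinarith
    rw [div_le_iff₀ (by positivity)] at this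
    linarith
  have hlow := tilt_lower hK ht0 hδ
  have hhigh := tilt_upper hK ht0 hδ hδ1
  have hmain : exp ((1 - δ ^ 2 / 16) * Y) ≤ 2 * exp ((1 - δ ^ 2 / 8) * Y)
      + (N + 1) * (pA A N * exp (-((1 - δ) * Y))) := by
    have e : t * ((1 - δ) * (K / t ^ 2)) = (1 - δ) * Y := by rw [hY]; field_simp
    rw [e] at hsplit
    have := Real.exp_le_exp.2 hlow
    have := Real.exp_le_exp.2 hhigh
    linarith
  -- the two tails together are at most half of the product
  have hhalf : 4 * exp ((1 - δ ^ 2 / 8) * Y) ≤ exp ((1 - δ ^ 2 / 16) * Y) := by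
    rw [← Real.exp_log (show (0 : ℝ) < 4 by norm_num), ← Real.exp_add]
    refine Real.exp_le_exp.2 ?_
    linarith
  have hfin : exp ((2 - δ - δ ^ 2 / 16) * Y) ≤ 2 * (N + 1) * pA A N := by
    have h1 : exp ((1 - δ ^ 2 / 16) * Y) ≤ 2 * (N + 1) * pA A N * exp (-((1 - δ) * Y)) := by
      linarith
    have h2 : exp ((2 - δ - δ ^ 2 / 16) * Y)
        = exp ((1 - δ ^ 2 / 16) * Y) * exp ((1 - δ) * Y) := by
      rw [← Real.exp_add]; congr 1; ring
    calc exp ((2 - δ - δ ^ 2 / 16) * Y)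
        ≤ 2 * (N + 1) * pA A N * exp (-((1 - δ) * Y)) * exp ((1 - δ) * Y) := by
          rw [h2]; gcongr
      _ = _ := by rw [mul_assoc, ← Real.exp_add]; simp
  have hp : (0 : ℝ) < pA A N := by
    by_contra h
    have : (pA A N : ℝ) = 0 := le_antisymm (not_lt.1 h) (by positivity)
    rw [this, mul_zero] at hfin
    exact absurd hfin (not_le.2 (exp_pos _))
  rw [← Real.le_log_iff_exp_le (by positivity), Real.log_mul (by positivity) hp.ne',
    Real.log_mul (by norm_num) (by positivity)] at hfin
  have h6 : (1 - 2 * δ) * (2 * s) ≤ (2 - δ - δ ^ 2 / 16) * Y := by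
    have h7 : (1 - 2 * δ) * (2 * s) ≤ (1 - 2 * δ) * (2 * ((1 + δ) * Y)) := by
      have : 0 ≤ 1 - 2 * δ := by linarith
      gcongr
    refine h7.trans ?_
    rw [← mul_assoc, ← mul_assoc]
    gcongr
    linarith [sq_nonneg δ]
  linarith

theorem partition_cofinite_asymptotics (A : Set ℕ) (hA : ∀ a ∈ A, 0 < a)
    (hcof : ({n : ℕ | 0 < n} \ A).Finite) :
    (fun n : ℕ => Real.log (pA A n)) ~[atTop]
      (fun n : ℕ => Real.pi * Real.sqrt (2 / 3) * Real.sqrt n) := by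
  obtain ⟨B, hB⟩ := hcof.bddAbove
  have hMA : ∀ m, B + 1 ≤ m → m ∈ A := fun m hm => by
    by_contra h
    have := hB ⟨show 0 < m by omega, h⟩
    omega
  have hc : ∀ n : ℕ, Real.pi * Real.sqrt (2 / 3) * Real.sqrt n = 2 * √(π ^ 2 / 6 * n) := by
    intro n
    rw [Real.sqrt_mul (by positivity), ← mul_assoc]
    congr 1
    rw [show π ^ 2 / 6 = (π / 2) ^ 2 * (2 / 3) by ring, Real.sqrt_mul (by positivity),
      Real.sqrt_sq (by positivity)]
    ring
  simp only [hc]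
  refine isLittleO_iff.2 fun ε hε => ?_
  have hδ : 0 < min (ε / 3) (1 / 2) := by positivity
  filter_upwards [le_log_pA (Nat.succ_pos B) hMA hδ (min_le_right _ _),
    eventually_gt_atTop 0] with n h1 hn
  have h2 := log_pA_le A hn
  have h3 : 0 ≤ 2 * √(π ^ 2 / 6 * (n : ℝ)) := by positivity
  have h4 := min_le_left (ε / 3) (1 / 2)
  rw [Pi.sub_apply, Real.norm_eq_abs, Real.norm_eq_abs, abs_of_nonneg h3, abs_le]
  constructor <;> nlinarith
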